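/- arXiv:2508.01075 — 4 statements merged into one kernel-verified Lean document; each statement's English description precedes it below -/
import Mathlib

section
/- Let X be a uniformly s-path connected metric space with control function ρ, let A ⊆ X, let r > 0, and let C be an s-path component of X \ N_r(A). Then for every R > 0 one has ∂_R(C) ⊆ N_{ρ(R)+r}(A); in particular, C is a coarse complementary component of A. -/
/-!
Adding to an `s`-path connected set a point at distance at most `s` keeps it `s`-path connected, so
by maximality the `s`-boundary of an `s`-path component of `W` lies outside `W`. For
`W = X \ N_r(A)` this says `∂_s(C) ⊆ N_r(A)`.

A path of diameter at most `ρ(R)` from a point of `∂_R(C)` to a point of `C` has a last point before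
it first enters `C`, and this point lies in `∂_s(C)`. Hence `∂_R(C) ⊆ N_{ρ(R)+r}(A)`.

A point of `N_R(C) ∩ N_R(X \ C)` is within `R` of `∂_{2R}(C)`, so controlling all the boundaries
`∂_R(C)` makes `C` a coarse complementary component.
-/

/-- The open `R`-neighborhood `N_R(A) = {x | dist(x, A) < R}` of a subset of a metric space. -/
def coarseNbhd {X : Type*} [MetricSpace X] (R : ℝ) (A : Set X) : Set X :=
  {x | ∃ a ∈ A, dist x a < R}

/-- `C` is a coarse complementary component of `A`: for every `R > 0` there is `R' > 0`
with `N_R(C) ∩ N_R(X \ C) ⊆ N_{R'}(A)`. -/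
def IsCoarseComplementaryComponent {X : Type*} [MetricSpace X] (A C : Set X) : Prop :=
  ∀ R > (0 : ℝ), ∃ R' > (0 : ℝ), coarseNbhd R C ∩ coarseNbhd R Cᶜ ⊆ coarseNbhd R' A

/-- The `r`-boundary `∂_r(C) = {x ∈ X \ C | dist(x, C) ≤ r}`. -/
def rBoundary {X : Type*} [MetricSpace X] (r : ℝ) (C : Set X) : Set X :=
  {x | x ∉ C ∧ ∃ c ∈ C, dist x c ≤ r}

/-- An `s`-path from `x` to `y` lying in `M`: a finite sequence `x = x_0, …, x_n = y` of points
of `M` with consecutive distances at most `s`. -/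
def IsSPath {X : Type*} [MetricSpace X] (s : ℝ) (M : Set X) (x y : X) : Prop :=
  ∃ (n : ℕ) (f : ℕ → X), f 0 = x ∧ f n = y ∧ (∀ i ≤ n, f i ∈ M) ∧
    ∀ i < n, dist (f i) (f (i + 1)) ≤ s

/-- A subset `M` is `s`-path connected if any two of its points are joined by an
`s`-path lying in `M`. -/
def SPathConnected {X : Type*} [MetricSpace X] (s : ℝ) (M : Set X) : Prop :=
  ∀ x ∈ M, ∀ y ∈ M, IsSPath s M x y

/-- `C` is an `s`-path component of `W`: a maximal `s`-path connected subset of `W`. -/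
def IsSPathComponent {X : Type*} [MetricSpace X] (s : ℝ) (W C : Set X) : Prop :=
  C ⊆ W ∧ SPathConnected s C ∧ ∀ D, C ⊆ D → D ⊆ W → SPathConnected s D → D = C

/-- `X` is uniformly `s`-path connected with control function `ρ`: any two points at distance
at most `r` are joined by an `s`-path in `X` of diameter at most `ρ(r)`. -/
def UniformlySPathConnected (X : Type*) [MetricSpace X] (s : ℝ) (ρ : ℝ → ℝ) : Prop :=
  ∀ (x y : X) (r : ℝ), dist x y ≤ r →
    ∃ (n : ℕ) (f : ℕ → X), f 0 = x ∧ f n = y ∧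
      (∀ i < n, dist (f i) (f (i + 1)) ≤ s) ∧
      ∀ i ≤ n, ∀ j ≤ n, dist (f i) (f j) ≤ ρ r

section

variable {X : Type*} [MetricSpace X] {s r R S : ℝ} {ρ : ℝ → ℝ} {A C M N W : Set X} {x y z : X}

theorem mem_coarseNbhd_of_dist_le (hy : y ∈ coarseNbhd r A) (hxy : dist x y ≤ R) :
    x ∈ coarseNbhd (R + r) A := by
  obtain ⟨a, ha, hya⟩ := hy
  exact ⟨a, ha, (dist_triangle x y a).trans_lt (add_lt_add_of_le_of_lt hxy hya)⟩

theorem coarseNbhd_inter_coarseNbhd_compl_subset :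
    coarseNbhd R C ∩ coarseNbhd S Cᶜ ⊆ coarseNbhd S (rBoundary (R + S) C) := by
  rintro x ⟨⟨c, hc, hxc⟩, d, hd, hxd⟩
  have hdc : dist d c ≤ R + S := by linarith [dist_triangle_left d c x]
  exact ⟨d, ⟨hd, c, hc, hdc⟩, hxd⟩

theorem IsCoarseComplementaryComponent.of_rBoundary_subset
    (h : ∀ R > (0 : ℝ), ∃ R' > (0 : ℝ), rBoundary R C ⊆ coarseNbhd R' A) :
    IsCoarseComplementaryComponent A C := by
  intro R hR
  obtain ⟨R', hR', hsub⟩ := h (R + R) (add_pos hR hR)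
  refine ⟨R + R', add_pos hR hR', fun x hx => ?_⟩
  obtain ⟨d, hd, hxd⟩ := coarseNbhd_inter_coarseNbhd_compl_subset hx
  exact mem_coarseNbhd_of_dist_le (hsub hd) hxd.le

theorem UniformlySPathConnected.exists_mem_rBoundary_dist_le
    (hX : UniformlySPathConnected X s ρ) (hx : x ∈ rBoundary R C) :
    ∃ y ∈ rBoundary s C, dist x y ≤ ρ R := by
  obtain ⟨hxC, c, hc, hxc⟩ := hx
  obtain ⟨n, f, rfl, rfl, hstep, hdiam⟩ := hX x c R hxc
  obtain ⟨i, hi, hfi, hfi_succ⟩ : ∃ i < n, f i ∉ C ∧ f (i + 1) ∈ C := by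
    obtain ⟨i, hi, hi_succ⟩ := Nat.exists_not_and_succ_of_not_zero_of_exists
      (p := fun i => i ≤ n → f i ∈ C) (fun h => hxC (h (Nat.zero_le n))) ⟨n, fun _ => hc⟩
    obtain ⟨hin, hfi⟩ := Classical.not_imp.mp hi
    have hlt : i < n := hin.lt_of_ne fun h => hfi (h ▸ hc)
    exact ⟨i, hlt, hfi, hi_succ hlt⟩
  exact ⟨f i, ⟨hfi, f (i + 1), hfi_succ, hstep i hi⟩, hdiam 0 (Nat.zero_le n) i hi.le⟩

theorem UniformlySPathConnected.rBoundary_subset_coarseNbhd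
    (hX : UniformlySPathConnected X s ρ) (hC : rBoundary s C ⊆ coarseNbhd r A) (R : ℝ) :
    rBoundary R C ⊆ coarseNbhd (ρ R + r) A := by
  intro x hx
  obtain ⟨y, hy, hxy⟩ := hX.exists_mem_rBoundary_dist_le hx
  exact mem_coarseNbhd_of_dist_le (hC hy) hxy

theorem IsSPath.refl (hx : x ∈ M) : IsSPath s M x x :=
  ⟨0, fun _ => x, rfl, rfl, fun _ _ => hx, fun _ hi => absurd hi (Nat.not_lt_zero _)⟩

theorem IsSPath.mono (h : IsSPath s M x y) (hMN : M ⊆ N) : IsSPath s N x y := by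
  obtain ⟨n, f, h0, hn, hM, hstep⟩ := h
  exact ⟨n, f, h0, hn, fun i hi => hMN (hM i hi), hstep⟩

theorem IsSPath.cons (hx : x ∈ M) (hxy : dist x y ≤ s) (h : IsSPath s M y z) :
    IsSPath s M x z := by
  obtain ⟨n, f, rfl, hn, hM, hstep⟩ := h
  refine ⟨n + 1, fun i => Nat.casesOn i x f, rfl, hn, ?_, ?_⟩
  · rintro (_ | i) hi
    · exact hx
    · exact hM i (Nat.le_of_succ_le_succ hi)
  · rintro (_ | i) hi
    · exact hxy
    · exact hstep i (Nat.lt_of_succ_lt_succ hi)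

theorem IsSPath.symm (h : IsSPath s M x y) : IsSPath s M y x := by
  obtain ⟨n, f, h0, hn, hM, hstep⟩ := h
  refine ⟨n, fun i => f (n - i), by simpa using hn, by simpa using h0,
    fun i _ => hM _ (Nat.sub_le n i), fun i hi => ?_⟩
  have hsucc : n - i = n - (i + 1) + 1 := by omega
  beta_reduce
  rw [dist_comm, hsucc]
  exact hstep (n - (i + 1)) (by omega)

theorem SPathConnected.insert_of_dist_le (hC : SPathConnected s C) (hx : x ∈ C)
    (hyx : dist y x ≤ s) : SPathConnected s (insert y C) := by
  have hy : y ∈ insert y C := Set.mem_insert y C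
  have hsub : C ⊆ insert y C := Set.subset_insert y C
  have hfrom : ∀ z ∈ C, IsSPath s (insert y C) y z := fun z hz =>
    ((hC x hx z hz).mono hsub).cons hy hyx
  rintro a (rfl | ha) b (rfl | hb)
  · exact .refl hy
  · exact hfrom b hb
  · exact (hfrom a ha).symm
  · exact (hC a ha b hb).mono hsub

theorem IsSPathComponent.rBoundary_subset_compl (hC : IsSPathComponent s W C) :
    rBoundary s C ⊆ Wᶜ := by
  rintro y ⟨hyC, c, hc, hyc⟩ hyW
  obtain ⟨hCW, hconn, hmax⟩ := hC
  have hinsert : insert y C = C :=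
    hmax _ (Set.subset_insert y C) (Set.insert_subset hyW hCW) (hconn.insert_of_dist_le hc hyc)
  exact hyC (Set.insert_eq_self.mp hinsert)

end

/-- If `X` is uniformly `s`-path connected with control function `ρ`, `A ⊆ X`, `r > 0` and `C`
is an `s`-path component of `X \ N_r(A)`, then for every `R > 0` one has
`∂_R(C) ⊆ N_{ρ(R)+r}(A)`; in particular `C` is a coarse complementary component of `A`. -/
theorem sPathComponent_isCoarseComplementaryComponent
    {X : Type*} [MetricSpace X] (s : ℝ) (hs : 0 < s) (ρ : ℝ → ℝ) (hρ : ∀ t, 0 ≤ ρ t)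
    (hX : UniformlySPathConnected X s ρ) (A : Set X) (r : ℝ) (hr : 0 < r)
    (C : Set X) (hC : IsSPathComponent s (coarseNbhd r A)ᶜ C) :
    (∀ R > (0 : ℝ), rBoundary R C ⊆ coarseNbhd (ρ R + r) A) ∧
      IsCoarseComplementaryComponent A C := by
  have hsC : rBoundary s C ⊆ coarseNbhd r A := by
    simpa only [compl_compl] using hC.rBoundary_subset_compl
  have hRC (R : ℝ) : rBoundary R C ⊆ coarseNbhd (ρ R + r) A :=
    hX.rBoundary_subset_coarseNbhd hsC R
  exact ⟨fun R _ => hRC R, .of_rBoundary_subset fun R _ =>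
    ⟨ρ R + r, add_pos_of_nonneg_of_pos (hρ R) hr, hRC R⟩⟩
end

section
/- Let X be a uniformly s-path connected metric space, let A ⊆ X and r > 0. Then the union of any collection of s-path components of X \ N_r(A) is a coarse complementary component of A. -/
section

variable {X : Type*} [MetricSpace X] {s : ℝ}

theorem coarseNbhd_eq_thickening (R : ℝ) (A : Set X) : coarseNbhd R A = Metric.thickening R A :=
  Set.ext fun _ => Metric.mem_thickening_iff.symm

theorem coarseNbhd_coarseNbhd_subset (R r : ℝ) (A : Set X) :
    coarseNbhd R (coarseNbhd r A) ⊆ coarseNbhd (R + r) A := by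
  simpa only [coarseNbhd_eq_thickening] using Metric.thickening_thickening_subset R r A

namespace IsSPath

variable {M N : Set X} {x y z : X}

protected theorem refl_s2 (hx : x ∈ M) : IsSPath s M x x :=
  ⟨0, fun _ => x, rfl, rfl, fun _ _ => hx, fun _ hi => absurd hi (Nat.not_lt_zero _)⟩

theorem mono_s2 (hMN : M ⊆ N) (h : IsSPath s M x y) : IsSPath s N x y := by
  obtain ⟨n, f, hx, hy, hM, hstep⟩ := h
  exact ⟨n, f, hx, hy, fun i hi => hMN (hM i hi), hstep⟩

protected theorem symm_s2 (h : IsSPath s M x y) : IsSPath s M y x := by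
  obtain ⟨n, f, hx, hy, hM, hstep⟩ := h
  refine ⟨n, fun i => f (n - i), by simpa using hy, by simpa using hx,
    fun i _ => hM _ (Nat.sub_le n i), fun i hi => ?_⟩
  have hsucc : n - (i + 1) + 1 = n - i := by omega
  simpa only [hsucc, dist_comm] using hstep (n - (i + 1)) (by omega)

theorem snoc (h : IsSPath s M x y) (hz : z ∈ M) (hyz : dist y z ≤ s) : IsSPath s M x z := by
  obtain ⟨n, f, hx, hy, hM, hstep⟩ := h
  refine ⟨n + 1, fun i => if i ≤ n then f i else z, by simpa using hx, by simp,
    fun i _ => ?_, fun i hi => ?_⟩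
  · by_cases hin : i ≤ n
    · simpa only [if_pos hin] using hM i hin
    · simpa only [if_neg hin] using hz
  · rcases Nat.lt_succ_iff_lt_or_eq.mp hi with hin | rfl
    · simpa only [if_pos hin.le, if_pos (Nat.succ_le_of_lt hin)] using hstep i hin
    · simpa [hy] using hyz

theorem mem_of_step_closed {C : Set X} (h : IsSPath s M x y)
    (hC : ∀ a ∈ C, ∀ b ∈ M, dist a b ≤ s → b ∈ C) (hx : x ∈ C) : y ∈ C := by
  obtain ⟨n, f, rfl, rfl, hM, hstep⟩ := h
  have hf : ∀ i ≤ n, f i ∈ C := by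
    intro i
    induction i with
    | zero => exact fun _ => hx
    | succ i ih =>
      exact fun hi => hC (f i) (ih (by omega)) (f (i + 1)) (hM _ hi) (hstep i hi)
  exact hf n le_rfl

end IsSPath

protected theorem SPathConnected.insert {M : Set X} {x y : X} (hM : SPathConnected s M)
    (hx : x ∈ M) (hxy : dist x y ≤ s) : SPathConnected s (insert y M) := by
  have hsub : M ⊆ insert y M := Set.subset_insert y M
  have hy : y ∈ insert y M := Set.mem_insert y M
  have path_to_y (u : X) (hu : u ∈ M) : IsSPath s (insert y M) u y :=
    ((hM u hu x hx).mono_s2 hsub).snoc hy hxy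
  rintro u (rfl | hu) v (rfl | hv)
  · exact .refl hy
  · exact (path_to_y v hv).symm_s2
  · exact path_to_y u hu
  · exact (hM u hu v hv).mono_s2 hsub

namespace IsSPathComponent

variable {W C : Set X} {x y : X}

theorem mem_of_dist_le (hC : IsSPathComponent s W C) (hx : x ∈ C) (hy : y ∈ W)
    (hxy : dist x y ≤ s) : y ∈ C := by
  obtain ⟨hCW, hconn, hmax⟩ := hC
  have hinsert : insert y C = C :=
    hmax _ (Set.subset_insert y C) (Set.insert_subset hy hCW) (hconn.insert hx hxy)
  exact Set.insert_eq_self.mp hinsert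

theorem mem_of_isSPath (hC : IsSPathComponent s W C) (hx : x ∈ C) (hxy : IsSPath s W x y) :
    y ∈ C :=
  hxy.mem_of_step_closed (fun _ ha _ hb hab => hC.mem_of_dist_le ha hb hab) hx

end IsSPathComponent

theorem UniformlySPathConnected.coarseNbhd_inter_coarseNbhd_subset {ρ : ℝ → ℝ}
    (hX : UniformlySPathConnected X s ρ) {B C D : Set X}
    (hsep : ∀ c ∈ C, ∀ d ∈ D, ¬ IsSPath s Bᶜ c d) (R R' : ℝ) :
    coarseNbhd R C ∩ coarseNbhd R' D ⊆ coarseNbhd (R + ρ (R + R')) B := by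
  rintro x ⟨⟨c, hc, hxc⟩, ⟨d, hd, hxd⟩⟩
  have hcd : dist c d ≤ R + R' := by linarith [dist_triangle_left c d x]
  obtain ⟨n, f, rfl, rfl, hstep, hdiam⟩ := hX c d (R + R') hcd
  obtain ⟨i, hi, hiB⟩ : ∃ i ≤ n, f i ∈ B := by
    by_contra! havoid
    exact hsep _ hc _ hd ⟨n, f, rfl, rfl, havoid, hstep⟩
  refine ⟨f i, hiB, ?_⟩
  calc
    dist x (f i) ≤ dist x (f 0) + dist (f 0) (f i) := dist_triangle _ _ _
    _ < R + ρ (R + R') := add_lt_add_of_lt_of_le hxc (hdiam 0 (Nat.zero_le n) i hi)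

end

/-- In a uniformly `s`-path connected metric space `X`, for `A ⊆ X` and `r > 0`, the union of
any collection of `s`-path components of `X \ N_r(A)` is a coarse complementary component
of `A`. -/
theorem sUnion_sPathComponents_isCoarseComplementaryComponent
    {X : Type*} [MetricSpace X] (s : ℝ) (hs : 0 < s) (ρ : ℝ → ℝ) (hρ : ∀ t, 0 ≤ ρ t)
    (hX : UniformlySPathConnected X s ρ) (A : Set X) (r : ℝ) (hr : 0 < r)
    (𝒞 : Set (Set X)) (h𝒞 : ∀ C ∈ 𝒞, IsSPathComponent s (coarseNbhd r A)ᶜ C) :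
    IsCoarseComplementaryComponent A (⋃₀ 𝒞) := by
  have hsep : ∀ c ∈ ⋃₀ 𝒞, ∀ d ∈ (⋃₀ 𝒞)ᶜ, ¬ IsSPath s (coarseNbhd r A)ᶜ c d := by
    rintro c ⟨C, hC, hc⟩ d hd hcd
    exact hd ⟨C, hC, (h𝒞 C hC).mem_of_isSPath hc hcd⟩
  intro R hR
  refine ⟨R + ρ (R + R) + r, by linarith [hρ (R + R)], ?_⟩
  calc
    coarseNbhd R (⋃₀ 𝒞) ∩ coarseNbhd R (⋃₀ 𝒞)ᶜ
      ⊆ coarseNbhd (R + ρ (R + R)) (coarseNbhd r A) :=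
        hX.coarseNbhd_inter_coarseNbhd_subset hsep R R
    _ ⊆ coarseNbhd (R + ρ (R + R) + r) A := coarseNbhd_coarseNbhd_subset _ r A
end

section
/- Let X be a metric space, A ⊆ X, and let C be a coarse complementary component of A in X. Then for each s > 0 there exists p > 0 (depending on s and C) such that every s-path connected subset M ⊆ X \ N_p(A) satisfies M ⊆ C or M ∩ C = ∅ (i.e., M ⊆ X \ C). -/
/-!
An `s`-path that steps out of `C` has two consecutive points at distance less than `s + 1`, the
first in `C` and the second not, so the first lies in `N_{s+1}(C) ∩ N_{s+1}(X \ C)`, which is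
contained in some `N_p(A)`. Hence, outside `N_p(A)`, an `s`-path starting in `C` stays in `C`.
-/

section

variable {X : Type*} [MetricSpace X] {M C : Set X} {s R : ℝ} {x y : X}

theorem mem_coarseNbhd_inter_coarseNbhd_compl (hx : x ∈ C) (hy : y ∉ C) (hxy : dist x y < R) :
    x ∈ coarseNbhd R C ∩ coarseNbhd R Cᶜ :=
  have hR : dist x x < R := dist_self x ▸ dist_nonneg.trans_lt hxy
  ⟨⟨x, hx, hR⟩, ⟨y, hy, hxy⟩⟩

theorem IsSPath.mem_of_forall_step (hpath : IsSPath s M x y) (hx : x ∈ C)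
    (hstep : ∀ u ∈ M, ∀ v ∈ M, dist u v ≤ s → u ∈ C → v ∈ C) : y ∈ C := by
  obtain ⟨n, f, rfl, rfl, hfM, hdist⟩ := hpath
  have hfC : ∀ i ≤ n, f i ∈ C := by
    intro i
    induction i with
    | zero => exact fun _ => hx
    | succ i ih =>
      intro hi
      exact hstep _ (hfM i (by lia)) _ (hfM (i + 1) hi) (hdist i hi) (ih (by lia))
  exact hfC n le_rfl

theorem SPathConnected.subset_or_disjoint_of_forall_step (hM : SPathConnected s M)
    (hstep : ∀ u ∈ M, ∀ v ∈ M, dist u v ≤ s → u ∈ C → v ∈ C) : M ⊆ C ∨ Disjoint M C := by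
  refine or_iff_not_imp_right.mpr fun hmeet => ?_
  obtain ⟨x, hxM, hxC⟩ := Set.not_disjoint_iff.mp hmeet
  exact fun y hyM => (hM x hxM y hyM).mem_of_forall_step hxC hstep

theorem SPathConnected.subset_or_disjoint_of_disjoint_coarseNbhd_inter (hM : SPathConnected s M)
    (hsR : s < R) (hdisj : Disjoint M (coarseNbhd R C ∩ coarseNbhd R Cᶜ)) :
    M ⊆ C ∨ Disjoint M C := by
  refine hM.subset_or_disjoint_of_forall_step fun u huM v _ huv huC => ?_
  by_contra hvC
  have hu := mem_coarseNbhd_inter_coarseNbhd_compl huC hvC (huv.trans_lt hsR)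
  exact Set.disjoint_left.mp hdisj huM hu

end

/-- If `C` is a coarse complementary component of `A` in `X`, then for each `s > 0` there is
`p > 0` such that every `s`-path connected subset `M ⊆ X \ N_p(A)` satisfies `M ⊆ C` or
`M ∩ C = ∅`. -/
theorem sPathConnected_subset_or_disjoint
    {X : Type*} [MetricSpace X] (A C : Set X)
    (hC : IsCoarseComplementaryComponent A C) (s : ℝ) (hs : 0 < s) :
    ∃ p > (0 : ℝ), ∀ M : Set X, M ⊆ (coarseNbhd p A)ᶜ → SPathConnected s M →
      M ⊆ C ∨ M ∩ C = ∅ := by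
  obtain ⟨p, hp, hsub⟩ := hC (s + 1) (by positivity)
  refine ⟨p, hp, fun M hMA hM => ?_⟩
  have hdisj : Disjoint M (coarseNbhd (s + 1) C ∩ coarseNbhd (s + 1) Cᶜ) :=
    (Set.subset_compl_iff_disjoint_right.mp hMA).mono_right hsub
  exact (hM.subset_or_disjoint_of_disjoint_coarseNbhd_inter (lt_add_one s) hdisj).imp_right
    Disjoint.inter_eq
end

section
/- Let α be a topological space equipped with a circular order such that for all a, b ∈ α the open interval {y ∈ α | sbtw a y b} is an open set. Let x : ℕ → α be a sequence and z ∈ α such that sbtw (x i) (x (i+1)) z holds for every i ≥ 0. Then x 0 is not a cluster point of the subsequence (x i)_{i ≥ 2}; in particular, no subsequence of (x i)_{i ≥ 2} converges to x 0. -/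
open Filter

/-!
For fixed `z` the relation `sbtw a b z` is transitive in `a` and `b`, so the points `x n` with
`n ≥ m + 1` run through the circle from `x (m + 1)` towards `z` and never enter the interval
`(z, x (m + 1))`, which is an open neighbourhood of `x m`.
-/

section SBtwChain

variable {α : Type*} [CircularPreorder α] {x : ℕ → α} {z : α}

theorem sbtw_of_lt_of_forall_sbtw_succ (h : ∀ i, sbtw (x i) (x (i + 1)) z) {m n : ℕ}
    (hmn : m < n) : sbtw (x m) (x n) z :=
  haveI : IsTrans α (sbtw · · z) := ⟨fun _ _ _ => sbtw_trans_left⟩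
  Nat.rel_of_forall_rel_succ_of_lt (sbtw · · z) h hmn

theorem notMem_cIoo_of_le_of_forall_sbtw_succ (h : ∀ i, sbtw (x i) (x (i + 1)) z) {m n : ℕ}
    (hmn : m ≤ n) : x n ∉ Set.cIoo z (x m) := by
  obtain rfl | hlt := hmn.eq_or_lt
  · exact sbtw_irrefl_right
  · exact (sbtw_of_lt_of_forall_sbtw_succ h hlt).not_sbtw

theorem not_clusterPt_of_sbtw_chain_general [TopologicalSpace α]
    (hopen : ∀ b, IsOpen (Set.cIoo z b)) (h : ∀ i, sbtw (x i) (x (i + 1)) z)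
    {ι : Type*} {l : Filter ι} {φ : ι → ℕ} {m : ℕ} (hφ : ∀ᶠ i in l, m < φ i) :
    ¬ MapClusterPt (x m) l (fun i => x (φ i)) := by
  intro hcluster
  have hnhds : Set.cIoo z (x (m + 1)) ∈ nhds (x m) := (hopen _).mem_nhds (h m).cyclic_right
  obtain ⟨i, hmem, hlt⟩ := ((hcluster.frequently hnhds).and_eventually hφ).exists
  exact notMem_cIoo_of_le_of_forall_sbtw_succ h hlt hmem

end SBtwChain

/-- Let `α` be a topological space with a circular order in which the open intervals
`{y | sbtw a y b}` are open sets. If `x : ℕ → α` is a sequence and `z` a point with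
`sbtw (x i) (x (i+1)) z` for all `i`, then `x 0` is not a cluster point of the
subsequence `(x i)_{i ≥ 2}`; in particular no subsequence of `(x i)_{i ≥ 2}`
converges to `x 0`. -/
theorem not_clusterPt_of_sbtw_chain {α : Type*} [TopologicalSpace α] [CircularOrder α]
    (hopen : ∀ a b : α, IsOpen {y : α | sbtw a y b})
    (x : ℕ → α) (z : α) (h : ∀ i : ℕ, sbtw (x i) (x (i + 1)) z) :
    ¬ MapClusterPt (x 0) atTop (fun i : ℕ => x (i + 2)) ∧
      ∀ φ : ℕ → ℕ, StrictMono φ → (∀ i, 2 ≤ φ i) →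
        ¬ Tendsto (fun i => x (φ i)) atTop (nhds (x 0)) :=
  ⟨not_clusterPt_of_sbtw_chain_general (hopen z) h (.of_forall fun i => (i + 1).succ_pos),
    fun _ _ hφ hlim => not_clusterPt_of_sbtw_chain_general (hopen z) h
      (.of_forall fun i => two_pos.trans_le (hφ i)) hlim.mapClusterPt⟩
end
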